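/- Let r > 0, θ ∈ (0, π), and let β, γ, δ, U, V, W be real numbers with (2 + V/r) > 0. Let g̃ be the symmetric 4×4 matrix indexed by (t, r, θ, ψ) with g̃_{tt} = (V/r)e^{2β} + r²e^{2γ}U²cosh 2δ + r²e^{−2γ}W²cosh 2δ + 2r²UW sinh 2δ, g̃_{tr} = −(1 + V/r)e^{2β} − r²e^{2γ}U²cosh 2δ − r²e^{−2γ}W²cosh 2δ − 2r²UW sinh 2δ, g̃_{tθ} = −r²(e^{2γ}U cosh 2δ + W sinh 2δ), g̃_{tψ} = −r²(e^{−2γ}W cosh 2δ + U sinh 2δ) sin θ, and whose spatial 3×3 block (in r, θ, ψ) is the matrix G with G₁₁ = (2 + V/r)e^{2β} + r²e^{2γ}U²cosh 2δ + r²e^{−2γ}W²cosh 2δ + 2r²UW sinh 2δ, G₁₂ = r²(e^{2γ}U cosh 2δ + W sinh 2δ), G₁₃ = r²(e^{−2γ}W cosh 2δ + U sinh 2δ) sin θ, G₂₂ = r²e^{2γ}cosh 2δ, G₂₃ = r² sinh 2δ sin θ, G₃₃ = r²e^{−2γ}cosh 2δ sin²θ. Then g̃ is invertible and (g̃⁻¹)_{tt}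 = −(2 + V/r)e^{−2β}; equivalently, the lapse 𝒩 := (−(g̃⁻¹)_{tt})^{−1/2} satisfies 𝒩² = e^{4β}·(G⁻¹)₁₁ = e^{2β}/(2 + V/r). -/

import Mathlib

/-!
With `du = dt - dr`, the 1-forms `dt`, `dr`, `dθ - U du`, `sin θ dψ - W du` split the metric into blocks.
The angular block has determinant `r⁴ sin² θ (cosh² 2δ - sinh² 2δ) = r⁴ sin² θ`, while what remains
on `(dt, dr)` is `e^{2β} [[V/r, -(1 + V/r)], [-(1 + V/r), 2 + V/r]]`, of determinant `-e^{4β}`.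
Hence `det g̃ = -e^{4β} r⁴ sin² θ` and `det G = (2 + V/r) e^{2β} r⁴ sin² θ`, both nonzero.
The same splitting gives the first column of each inverse explicitly, so its top entry is found
by checking `A v = e₀` (`inv_zero_zero_of_mulVec`) rather than by expanding cofactors.

In the lemmas below `x`, `E`, `a`, `b`, `c`, `s`, `S` stand for `V/r`, `e^{2β}`, `e^{2γ}`,
`e^{-2γ}`, `cosh 2δ`, `sinh 2δ`, `sin θ`; only `a b = 1` and `c² - s² = 1` matter.
-/

/-- The spatial block `G` as an algebraic expression in its coefficients. -/
def bondiSpatial (r x E a b c s S U W : ℝ) : Matrix (Fin 3) (Fin 3) ℝ :=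
  !![(2 + x) * E + r ^ 2 * a * U ^ 2 * c + r ^ 2 * b * W ^ 2 * c + 2 * r ^ 2 * U * W * s,
      r ^ 2 * (a * U * c + W * s),
      r ^ 2 * (b * W * c + U * s) * S;
     r ^ 2 * (a * U * c + W * s), r ^ 2 * a * c, r ^ 2 * s * S;
     r ^ 2 * (b * W * c + U * s) * S, r ^ 2 * s * S, r ^ 2 * b * c * S ^ 2]

/-- The spacetime metric `g̃` as an algebraic expression in its coefficients. -/
def bondiSpacetime (r x E a b c s S U W : ℝ) : Matrix (Fin 4) (Fin 4) ℝ :=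
  !![x * E + r ^ 2 * a * U ^ 2 * c + r ^ 2 * b * W ^ 2 * c + 2 * r ^ 2 * U * W * s,
      -((1 + x) * E) - r ^ 2 * a * U ^ 2 * c - r ^ 2 * b * W ^ 2 * c - 2 * r ^ 2 * U * W * s,
      -(r ^ 2 * (a * U * c + W * s)),
      -(r ^ 2 * (b * W * c + U * s) * S);
     -((1 + x) * E) - r ^ 2 * a * U ^ 2 * c - r ^ 2 * b * W ^ 2 * c - 2 * r ^ 2 * U * W * s,
      (2 + x) * E + r ^ 2 * a * U ^ 2 * c + r ^ 2 * b * W ^ 2 * c + 2 * r ^ 2 * U * W * s,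
      r ^ 2 * (a * U * c + W * s),
      r ^ 2 * (b * W * c + U * s) * S;
     -(r ^ 2 * (a * U * c + W * s)),
      r ^ 2 * (a * U * c + W * s), r ^ 2 * a * c, r ^ 2 * s * S;
     -(r ^ 2 * (b * W * c + U * s) * S),
      r ^ 2 * (b * W * c + U * s) * S, r ^ 2 * s * S, r ^ 2 * b * c * S ^ 2]

lemma det_bondiSpatial (r x E a b c s S U W : ℝ) :
    (bondiSpatial r x E a b c s S U W).det
      = (2 + x) * E * r ^ 4 * S ^ 2 * (a * b * c ^ 2 - s ^ 2) := by
  rw [bondiSpatial, Matrix.det_fin_three]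
  simp
  ring

lemma det_bondiSpacetime (r x E a b c s S U W : ℝ) :
    (bondiSpacetime r x E a b c s S U W).det
      = -(E ^ 2 * r ^ 4 * S ^ 2 * (a * b * c ^ 2 - s ^ 2)) := by
  rw [bondiSpacetime, Matrix.det_succ_row_zero]
  simp [Fin.sum_univ_succ, Matrix.det_fin_three, Fin.succAbove]
  ring

lemma inv_zero_zero_of_mulVec {n : ℕ} (A : Matrix (Fin (n + 1)) (Fin (n + 1)) ℝ)
    (hA : IsUnit A.det) (v : Fin (n + 1) → ℝ) (h : A.mulVec v = Pi.single 0 1) :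
    A⁻¹ 0 0 = v 0 := by
  have h1 : A⁻¹.mulVec (A.mulVec v) = v := by
    rw [Matrix.mulVec_mulVec, Matrix.nonsing_inv_mul A hA, Matrix.one_mulVec]
  rw [h, Matrix.mulVec_single_one] at h1
  exact congrFun h1 0

lemma inv_bondiSpatial (r x E a b c s S U W : ℝ) (hx : 2 + x ≠ 0) (hE : E ≠ 0) (hS : S ≠ 0)
    (h : IsUnit (bondiSpatial r x E a b c s S U W).det) :
    (bondiSpatial r x E a b c s S U W)⁻¹ 0 0 = 1 / ((2 + x) * E) := by
  refine inv_zero_zero_of_mulVec _ h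
    ![1 / ((2 + x) * E), -U / ((2 + x) * E), -W / ((2 + x) * E * S)] ?_
  ext i
  fin_cases i <;>
    simp [bondiSpatial, Matrix.mulVec, dotProduct, Fin.sum_univ_succ] <;> field_simp <;> ring

lemma inv_bondiSpacetime (r x E a b c s S U W : ℝ) (hE : E ≠ 0) (hS : S ≠ 0)
    (h : IsUnit (bondiSpacetime r x E a b c s S U W).det) :
    (bondiSpacetime r x E a b c s S U W)⁻¹ 0 0 = -((2 + x) / E) := by
  refine inv_zero_zero_of_mulVec _ h ![-((2 + x) / E), -((1 + x) / E), -U / E, -W / (E * S)] ?_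
  ext i
  fin_cases i <;>
    simp [bondiSpacetime, Matrix.mulVec, dotProduct, Fin.sum_univ_succ] <;> field_simp <;> ring

open Real

/-- The Bondi radiating metric in coordinates `(t, r, θ, ψ)` (with `t = u + r`) is
invertible, `(g̃⁻¹)_{tt} = -(2 + V/r) e^{-2β}`, and the lapse
`𝒩 = (-(g̃⁻¹)_{tt})^{-1/2}` satisfies `𝒩² = e^{4β} (G⁻¹)₁₁ = e^{2β}/(2 + V/r)`. -/
theorem bondi_metric_lapse
    (r θ β γ δ U V W : ℝ) (hr : 0 < r) (hθ : θ ∈ Set.Ioo 0 π)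
    (hpos : 0 < 2 + V / r)
    (gt : Matrix (Fin 4) (Fin 4) ℝ) (G : Matrix (Fin 3) (Fin 3) ℝ)
    (hG : G = !![
      (2 + V / r) * exp (2 * β) + r ^ 2 * exp (2 * γ) * U ^ 2 * cosh (2 * δ)
        + r ^ 2 * exp (-(2 * γ)) * W ^ 2 * cosh (2 * δ)
        + 2 * r ^ 2 * U * W * sinh (2 * δ),
      r ^ 2 * (exp (2 * γ) * U * cosh (2 * δ) + W * sinh (2 * δ)),
      r ^ 2 * (exp (-(2 * γ)) * W * cosh (2 * δ) + U * sinh (2 * δ)) * sin θ ;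
      r ^ 2 * (exp (2 * γ) * U * cosh (2 * δ) + W * sinh (2 * δ)),
      r ^ 2 * exp (2 * γ) * cosh (2 * δ),
      r ^ 2 * sinh (2 * δ) * sin θ ;
      r ^ 2 * (exp (-(2 * γ)) * W * cosh (2 * δ) + U * sinh (2 * δ)) * sin θ,
      r ^ 2 * sinh (2 * δ) * sin θ,
      r ^ 2 * exp (-(2 * γ)) * cosh (2 * δ) * sin θ ^ 2])
    (hgt : gt = !![
      -- row t
      (V / r) * exp (2 * β) + r ^ 2 * exp (2 * γ) * U ^ 2 * cosh (2 * δ)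
        + r ^ 2 * exp (-(2 * γ)) * W ^ 2 * cosh (2 * δ)
        + 2 * r ^ 2 * U * W * sinh (2 * δ),
      -((1 + V / r) * exp (2 * β)) - r ^ 2 * exp (2 * γ) * U ^ 2 * cosh (2 * δ)
        - r ^ 2 * exp (-(2 * γ)) * W ^ 2 * cosh (2 * δ)
        - 2 * r ^ 2 * U * W * sinh (2 * δ),
      -(r ^ 2 * (exp (2 * γ) * U * cosh (2 * δ) + W * sinh (2 * δ))),
      -(r ^ 2 * (exp (-(2 * γ)) * W * cosh (2 * δ) + U * sinh (2 * δ)) * sin θ) ;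
      -- row r
      -((1 + V / r) * exp (2 * β)) - r ^ 2 * exp (2 * γ) * U ^ 2 * cosh (2 * δ)
        - r ^ 2 * exp (-(2 * γ)) * W ^ 2 * cosh (2 * δ)
        - 2 * r ^ 2 * U * W * sinh (2 * δ),
      G 0 0, G 0 1, G 0 2 ;
      -- row θ
      -(r ^ 2 * (exp (2 * γ) * U * cosh (2 * δ) + W * sinh (2 * δ))),
      G 1 0, G 1 1, G 1 2 ;
      -- row ψ
      -(r ^ 2 * (exp (-(2 * γ)) * W * cosh (2 * δ) + U * sinh (2 * δ)) * sin θ),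
      G 2 0, G 2 1, G 2 2]) :
    IsUnit gt.det ∧
    gt⁻¹ 0 0 = -((2 + V / r) * exp (-(2 * β))) ∧
    ((-(gt⁻¹ 0 0)) ^ (-(1 / 2 : ℝ))) ^ 2 = exp (4 * β) * G⁻¹ 0 0 ∧
    exp (4 * β) * G⁻¹ 0 0 = exp (2 * β) / (2 + V / r) := by
  have hS : sin θ ≠ 0 := (sin_pos_of_mem_Ioo hθ).ne'
  have hE : exp (2 * β) ≠ 0 := (exp_pos _).ne'
  have hr0 : r ≠ 0 := hr.ne'
  have hang : exp (2 * γ) * exp (-(2 * γ)) * cosh (2 * δ) ^ 2 - sinh (2 * δ) ^ 2 = 1 := by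
    rw [← exp_add, add_neg_cancel, exp_zero, one_mul, cosh_sq_sub_sinh_sq]
  have hG' : G = bondiSpatial r (V / r) (exp (2 * β)) (exp (2 * γ)) (exp (-(2 * γ)))
      (cosh (2 * δ)) (sinh (2 * δ)) (sin θ) U W := hG
  have hgt' : gt = bondiSpacetime r (V / r) (exp (2 * β)) (exp (2 * γ)) (exp (-(2 * γ)))
      (cosh (2 * δ)) (sinh (2 * δ)) (sin θ) U W := by
    rw [hgt, hG]; rfl
  have hGdet : IsUnit G.det := by
    rw [hG', det_bondiSpatial, hang, isUnit_iff_ne_zero]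
    have := hpos.ne'
    positivity
  have hgdet : IsUnit gt.det := by
    rw [hgt', det_bondiSpacetime, hang, isUnit_iff_ne_zero, neg_ne_zero]
    positivity
  have hGinv : G⁻¹ 0 0 = 1 / ((2 + V / r) * exp (2 * β)) := by
    rw [hG'] at hGdet ⊢
    exact inv_bondiSpatial _ _ _ _ _ _ _ _ _ _ hpos.ne' hE hS hGdet
  have hginv : gt⁻¹ 0 0 = -((2 + V / r) / exp (2 * β)) := by
    rw [hgt'] at hgdet ⊢
    exact inv_bondiSpacetime _ _ _ _ _ _ _ _ _ _ hE hS hgdet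
  have hlapse : exp (4 * β) * G⁻¹ 0 0 = exp (2 * β) / (2 + V / r) := by
    have h4 : exp (4 * β) = exp (2 * β) * exp (2 * β) := by rw [← exp_add]; ring_nf
    have := hpos.ne'
    rw [hGinv, h4, mul_one_div, mul_comm (2 + V / r), mul_div_mul_left _ _ hE]
  refine ⟨hgdet, ?_, ?_, hlapse⟩
  · rw [hginv, exp_neg, div_eq_mul_inv]
  · have hp : 0 ≤ (2 + V / r) / exp (2 * β) := (div_pos hpos (exp_pos _)).le
    rw [hlapse, hginv, neg_neg, ← rpow_natCast, ← rpow_mul hp]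
    norm_num [rpow_neg_one]
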